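/- Let $K$ be an algebraically closed field, $\Gamma$ a finite tree with a cyclic ordering of the edges around each vertex, and $A=KQ_\Gamma/I$ the basic Brauer tree algebra of $\Gamma$ with multiplicity one. Here the vertices of $Q_\Gamma$ are the edges of $\Gamma$; for each vertex $v$ of $\Gamma$ and each edge $i$ at $v$ there is an arrow from $i$ to the edge that follows $i$ around $v$ (a loop if $v$ is a leaf), and the arrows at $v$ form one cycle of $Q_\Gamma$, called an $A$-cycle. The ideal $I$ is generated by the products of two composable arrows that belong to different $A$-cycles and by the differences of the two full cycles starting at the same vertex of $Q_\Gamma$. Modules are left modules, and $Ae_i$ is the indecomposable projective module of the vertex $i$. Let $T_i$ and $T_j$ be indecomposable partial tilting complexes (that is, $\mathrm{Hom}_{D^b(A)}(T,T[k])=0$ for all $k\neq 0$), each of which is the minimal projective presentation $T=(P_0\xrightarrow{f}P_1)$, in degrees $0$ and $1$, of an indecomposable non-projective $A$-module. The diagram of such a $T$ is a connected path without self-intersections on $Q_\Gamma$, with at least one arrow, running through arrows in either direction and changing its orientation exactly where it changes the $A$-cycle, such that, for suitable decompositions $P_0\cong\bigoplus_{s}Ae_s$ over its sources $s$ and $P_1\cong\bigoplus_{t}Ae_t$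 over its sinks $t$, it is the union of the paths from $s$ to $t$ along a common $A$-cycle over all pairs $(s,t)$ for which the component $Ae_s\to Ae_t$ of $f$ is nonzero. The intersection of two diagrams consists of their common vertices and their common arrows. If the intersection of the diagrams of $T_i$ and $T_j$ has more than one connected component, then at least one of the spaces $\mathrm{Hom}_{D^b(A)}(T_i,T_j[-1])$ and $\mathrm{Hom}_{D^b(A)}(T_j,T_i[-1])$ is nonzero. -/

import Mathlib

open CategoryTheory CategoryTheory.Limits

universe w u v

/-- A Brauer tree with multiplicity one: a tree together with a cyclic ordering of the edges
around each vertex.  A dart of the tree is an edge `e` with a chosen end `x`; it stands for the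
place of `e` in the cyclic ordering around `x`, and `next` sends it to the place of the edge that
follows `e` around `x`. -/
structure BrauerTree (V : Type v) where
  graph : SimpleGraph V
  isTree : graph.IsTree
  next : Equiv.Perm graph.Dart
  next_fst : ∀ d, (next d).fst = d.fst
  sameCycle : ∀ d d' : graph.Dart, d.fst = d'.fst → next.SameCycle d d'

namespace BrauerTree

variable {V : Type v} (Γ : BrauerTree V)

/-- The vertices of the quiver `Q_Γ`: the edges of the tree. -/
abbrev Vertex : Type v := Γ.graph.edgeSet

/-- The arrows of the quiver `Q_Γ`: for each dart `d`, an arrow from the edge of `d` to the next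
edge around the vertex `d.fst`.  At a leaf of the tree this is a loop.  The arrows with a given
`d.fst` form one cycle of the quiver, and these cycles are the `A`-cycles; each vertex of the
quiver lies on exactly two of them. -/
abbrev Arrow : Type v := Γ.graph.Dart

variable {Γ}

/-- The vertex of the quiver where an arrow starts. -/
def src (a : Γ.Arrow) : Γ.Vertex := ⟨a.edge, a.edge_mem⟩

/-- The vertex of the quiver where an arrow ends. -/
def tgt (a : Γ.Arrow) : Γ.Vertex := src (Γ.next a)

/-- The `A`-cycle of an arrow, given by the corresponding vertex of the tree. -/
def cycle (a : Γ.Arrow) : V := a.fst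

variable (Γ)

/-- Generators of the path algebra of `Q_Γ`: trivial paths and arrows. -/
inductive Gen : Type v
  | vertex (x : Γ.Vertex)
  | arrow (a : Γ.Arrow)

variable (K : Type u) [Field K]

/-- The trivial path at `x`, as an element of the free algebra. -/
def freeIdem (x : Γ.Vertex) : FreeAlgebra K Γ.Gen := FreeAlgebra.ι K (Gen.vertex x)

/-- The arrow `a`, as an element of the free algebra. -/
def freeArrow (a : Γ.Arrow) : FreeAlgebra K Γ.Gen := FreeAlgebra.ι K (Gen.arrow a)

/-- The product of the `k` consecutive arrows of an `A`-cycle that begin with `a`.  Here `x * y`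
is the path that first runs through `x` and then through `y`. -/
def freeArc : Γ.Arrow → ℕ → FreeAlgebra K Γ.Gen
  | a, 0 => freeIdem Γ K (src a)
  | a, k + 1 => freeArrow Γ K a * freeArc (Γ.next a) k

/-- The relations of the basic Brauer tree algebra with multiplicity one.  The first five present
the path algebra of `Q_Γ` (a complete set of orthogonal idempotents, and arrows with their ends);
the last two are the Brauer relations. -/
inductive Rel : FreeAlgebra K Γ.Gen → FreeAlgebra K Γ.Gen → Prop
  | sum_idem : Rel (∑ᶠ x : Γ.Vertex, freeIdem Γ K x) 1
  | idem (x : Γ.Vertex) : Rel (freeIdem Γ K x * freeIdem Γ K x) (freeIdem Γ K x)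
  | orth (x y : Γ.Vertex) (h : x ≠ y) : Rel (freeIdem Γ K x * freeIdem Γ K y) 0
  | src_mul (a : Γ.Arrow) : Rel (freeIdem Γ K (src a) * freeArrow Γ K a) (freeArrow Γ K a)
  | mul_tgt (a : Γ.Arrow) : Rel (freeArrow Γ K a * freeIdem Γ K (tgt a)) (freeArrow Γ K a)
  /-- `αβ = 0 = βα`: an arrow followed by the arrow that leaves its end on the other `A`-cycle. -/
  | change (a : Γ.Arrow) : Rel (freeArrow Γ K a * freeArrow Γ K (Γ.next a).symm) 0
  /-- The two full cycles that start at a given vertex of the quiver agree. -/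
  | full (a : Γ.Arrow) :
      Rel (freeArc Γ K a (Function.minimalPeriod Γ.next a))
        (freeArc Γ K a.symm (Function.minimalPeriod Γ.next a.symm))

/-- The basic Brauer tree algebra `A = K Q_Γ / I` with multiplicity one. -/
def Alg : Type (max u v) := RingQuot (Rel Γ K)

noncomputable instance : Ring (Γ.Alg K) := inferInstanceAs (Ring (RingQuot (Rel Γ K)))

noncomputable instance : Algebra K (Γ.Alg K) := inferInstanceAs (Algebra K (RingQuot (Rel Γ K)))

/-- The idempotent `e_x` of `A`. -/
noncomputable def idem (x : Γ.Vertex) : Γ.Alg K := RingQuot.mkAlgHom K (Rel Γ K) (freeIdem Γ K x)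

/-- The indecomposable projective left module `A e_x`. -/
abbrev Proj (x : Γ.Vertex) : Type (max u v) := Ideal.span {idem Γ K x}

/-- The cochain complexes of left `A`-modules. -/
abbrev Cplx : Type (max u v + 1) := CochainComplex (ModuleCat.{max u v} (Γ.Alg K)) ℤ

variable {Γ}

/-- The arrows of the path from `x` to `y` along an `A`-cycle that contains both (for `x ≠ y`,
there is at most one such cycle); the path is shorter than the full cycle. -/
def pathArrows (x y : Γ.Vertex) : Set Γ.Arrow :=
  {a | ∃ (b : Γ.Arrow) (k l : ℕ), src b = x ∧ src (Γ.next^[k] b) = y ∧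
    k < Function.minimalPeriod Γ.next b ∧ l < k ∧ a = Γ.next^[l] b}

variable (Γ)

/-- A connected path without self-intersections on the quiver `Q_Γ`, with at least one arrow,
which may run through arrows in both directions and which changes its orientation exactly where
it changes the `A`-cycle. -/
structure Diagram where
  /-- the number of arrows -/
  len : ℕ
  len_pos : 0 < len
  vertex : Fin (len + 1) → Γ.Vertex
  vertex_injective : Function.Injective vertex
  arrow : Fin len → Γ.Arrow
  /-- whether the path runs through the arrow in the direction of the arrow -/
  forward : Fin len → Prop
  step_forward : ∀ k, forward k →
    src (arrow k) = vertex k.castSucc ∧ tgt (arrow k) = vertex k.succ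
  step_backward : ∀ k, ¬ forward k →
    src (arrow k) = vertex k.succ ∧ tgt (arrow k) = vertex k.castSucc
  turn : ∀ k l : Fin len, (l : ℕ) = k + 1 →
    ((forward k ↔ forward l) ↔ cycle (arrow k) = cycle (arrow l))

namespace Diagram

variable {Γ}
variable (D D' : Γ.Diagram)

/-- The set of vertices on the diagram. -/
def verts : Set Γ.Vertex := Set.range D.vertex

/-- The set of arrows on the diagram. -/
def arrows : Set Γ.Arrow := Set.range D.arrow

/-- The sources of the diagram: the vertices where no arrow of the diagram ends. -/
def sources : Set Γ.Vertex := {x | x ∈ D.verts ∧ ∀ a ∈ D.arrows, tgt a ≠ x}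

/-- The sinks of the diagram: the vertices where no arrow of the diagram starts. -/
def sinks : Set Γ.Vertex := {x | x ∈ D.verts ∧ ∀ a ∈ D.arrows, src a ≠ x}

/-- The intersection of two diagrams: the common vertices, joined by the common arrows. -/
def inter : SimpleGraph ↥(D.verts ∩ D'.verts) :=
  SimpleGraph.fromRel fun x y => ∃ a ∈ D.arrows ∩ D'.arrows, src a = x.1 ∧ tgt a = y.1

variable {K}

open Classical in
/-- `D` is the diagram of the complex `T`, with differential `f : T⁰ → T¹`: there are
decompositions of `T⁰` as the sum of the `A e_i` over the sources `i` of `D`, and of `T¹` as the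
sum of the `A e_j` over the sinks `j` of `D`, such that `D` consists of the paths from `i` to `j`
for all `i`, `j` for which the component `A e_i → A e_j` of `f` is nonzero. -/
def IsDiagramOf (T : Γ.Cplx K) : Prop :=
  ∃ (φ : T.X 0 ≃ₗ[Γ.Alg K] ((i : D.sources) → Γ.Proj K i.1))
    (ψ : T.X 1 ≃ₗ[Γ.Alg K] ((j : D.sinks) → Γ.Proj K j.1)),
    D.arrows = ⋃ (i : D.sources) (j : D.sinks)
      (_ : LinearMap.proj (R := Γ.Alg K) j ∘ₗ ψ.toLinearMap ∘ₗ (T.d 0 1).hom ∘ₗ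
        φ.symm.toLinearMap ∘ₗ
          LinearMap.single (Γ.Alg K) (fun i : D.sources => Γ.Proj K i.1) i ≠ 0),
      pathArrows i.1 j.1

end Diagram

end BrauerTree

/-- A submodule `N` of `M` is superfluous if `N + L = M` implies `L = M`. -/
def Submodule.IsSuperfluous {R M : Type*} [Ring R] [AddCommGroup M] [Module R M]
    (N : Submodule R M) : Prop :=
  ∀ L : Submodule R M, N ⊔ L = ⊤ → L = ⊤

section Complexes

variable {R : Type u} [Ring R]

/-- `T` is a complex `T⁰ → T¹` of finitely generated projective modules, concentrated in the
degrees `0` and `1`. -/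
structure IsTwoTermPerfect (T : CochainComplex (ModuleCat.{u} R) ℤ) : Prop where
  isZero : ∀ k : ℤ, k ≠ 0 → k ≠ 1 → IsZero (T.X k)
  finite : ∀ k, Module.Finite R (T.X k)
  projective : ∀ k, Module.Projective R (T.X k)

/-- `T⁰ → T¹ → M → 0` is the minimal projective presentation of `M`: `T¹` is a projective cover
of `M`, and `T⁰` is a projective cover of the kernel of `T¹ → M`. -/
structure IsMinimalPresentation (T : CochainComplex (ModuleCat.{u} R) ℤ)
    (M : ModuleCat.{u} R) : Prop extends IsTwoTermPerfect T where
  exact : ∃ π : T.X 1 ⟶ M, Function.Surjective π.hom ∧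
    LinearMap.ker π.hom = LinearMap.range (T.d 0 1).hom
  superfluous_range : (LinearMap.range (T.d 0 1).hom).IsSuperfluous
  superfluous_ker : (LinearMap.ker (T.d 0 1).hom).IsSuperfluous

variable [HasDerivedCategory.{w} (ModuleCat.{u} R)]

/-- `Hom(S, T[k]) = 0` in the derived category.  (The bounded derived category is a full
subcategory of the derived category, stable under shifts.) -/
def HomVanishes (S T : CochainComplex (ModuleCat.{u} R) ℤ) (k : ℤ) : Prop :=
  ∀ f : DerivedCategory.Q.obj S ⟶ (DerivedCategory.Q.obj T)⟦k⟧, f = 0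

/-- `T` is an indecomposable partial tilting complex `T⁰ → T¹` that is the minimal projective
presentation of an indecomposable non-projective module. -/
structure IsPartialTiltingPresentation (T : CochainComplex (ModuleCat.{u} R) ℤ) : Prop where
  indecomposable : Indecomposable (DerivedCategory.Q.obj T)
  partialTilting : ∀ k : ℤ, k ≠ 0 → HomVanishes T T k
  presentation : ∃ M : ModuleCat.{u} R, Indecomposable M ∧ ¬ Module.Projective R M ∧
    IsMinimalPresentation T M

end Complexes

namespace BrauerTree

section Combinatorics

variable {V : Type v} {Γ : BrauerTree V}

theorem src_eq_src_iff {a b : Γ.Arrow} : src a = src b ↔ a = b ∨ a = b.symm := by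
  rw [src, src, Subtype.mk.injEq, SimpleGraph.dart_edge_eq_iff]

theorem arrow_ext {a b : Γ.Arrow} (h : src a = src b) (hc : a.fst = b.fst) : a = b := by
  rcases src_eq_src_iff.1 h with h | h
  · exact h
  · subst h
    exact absurd hc.symm b.fst_ne_snd

theorem src_symm (a : Γ.Arrow) : src a.symm = src a := src_eq_src_iff.2 (Or.inr rfl)

theorem fst_mem_src (a : Γ.Arrow) : a.fst ∈ (src a).1 := by
  simp [src, SimpleGraph.Dart.edge]

theorem fst_mem_tgt (a : Γ.Arrow) : a.fst ∈ (tgt a).1 := by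
  rw [← Γ.next_fst a]
  exact fst_mem_src (Γ.next a)

theorem fst_iterate (a : Γ.Arrow) (k : ℕ) : (Γ.next^[k] a).fst = a.fst := by
  induction k with
  | zero => rfl
  | succ k ih => rw [Function.iterate_succ_apply', Γ.next_fst, ih]

theorem tgt_iterate (a : Γ.Arrow) (k : ℕ) : tgt (Γ.next^[k] a) = src (Γ.next^[k + 1] a) := by
  rw [Function.iterate_succ_apply', tgt]

/-- Two edges of the tree that meet in `p` lie on the same side of a third edge. -/
theorem reachable_deleteEdges {e x y : Γ.Vertex} (hx : x ≠ e) (hy : y ≠ e) {p : V}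
    (hpx : p ∈ x.1) (hpy : p ∈ y.1) {q r : V} (hq : q ∈ x.1) (hr : r ∈ y.1) :
    (Γ.graph.deleteEdges {e.1}).Reachable q r := by
  have key : ∀ z : Γ.Vertex, z ≠ e → ∀ s ∈ z.1, ∀ t ∈ z.1,
      (Γ.graph.deleteEdges {e.1}).Reachable s t := by
    intro z hz s hs t ht
    by_cases hst : s = t
    · rw [hst]
    · have hz' : z.1 = s(s, t) := (Sym2.mem_and_mem_iff hst).1 ⟨hs, ht⟩
      refine SimpleGraph.Adj.reachable ?_
      rw [SimpleGraph.deleteEdges_adj, ← SimpleGraph.mem_edgeSet, ← hz']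
      exact ⟨z.2, fun h => hz (Subtype.ext h)⟩
  exact (key x hx q hq p hpx).trans (key y hy p hpy r hr)

namespace Diagram

variable (D D' : Γ.Diagram)

theorem fst_mem_vertex (k : Fin D.len) :
    (D.arrow k).fst ∈ (D.vertex k.castSucc).1 ∧ (D.arrow k).fst ∈ (D.vertex k.succ).1 := by
  by_cases hk : D.forward k
  · rw [← (D.step_forward k hk).1, ← (D.step_forward k hk).2]
    exact ⟨fst_mem_src _, fst_mem_tgt _⟩
  · rw [← (D.step_backward k hk).1, ← (D.step_backward k hk).2]
    exact ⟨fst_mem_tgt _, fst_mem_src _⟩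

theorem src_mem_verts {a : Γ.Arrow} (ha : a ∈ D.arrows) : src a ∈ D.verts := by
  obtain ⟨k, rfl⟩ := ha
  by_cases hk : D.forward k
  · exact ⟨_, (D.step_forward k hk).1.symm⟩
  · exact ⟨_, (D.step_backward k hk).1.symm⟩

theorem tgt_mem_verts {a : Γ.Arrow} (ha : a ∈ D.arrows) : tgt a ∈ D.verts := by
  obtain ⟨k, rfl⟩ := ha
  by_cases hk : D.forward k
  · exact ⟨_, (D.step_forward k hk).2.symm⟩
  · exact ⟨_, (D.step_backward k hk).2.symm⟩

theorem forward_succ {k l : Fin D.len} (hk : D.forward k)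
    (h : tgt (D.arrow k) = src (D.arrow l)) : (l : ℕ) = k + 1 ∧ D.forward l := by
  rw [(D.step_forward k hk).2] at h
  by_cases hl : D.forward l
  · rw [(D.step_forward l hl).1] at h
    have := congrArg Fin.val (D.vertex_injective h)
    simp only [Fin.val_succ, Fin.val_castSucc] at this
    exact ⟨this.symm, hl⟩
  · rw [(D.step_backward l hl).1] at h
    have := Fin.succ_injective _ (D.vertex_injective h)
    exact absurd hk (this ▸ hl)

theorem backward_succ {k l : Fin D.len} (hk : ¬ D.forward k)
    (h : tgt (D.arrow k) = src (D.arrow l)) : (k : ℕ) = l + 1 ∧ ¬ D.forward l := by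
  rw [(D.step_backward k hk).2] at h
  by_cases hl : D.forward l
  · rw [(D.step_forward l hl).1] at h
    have := Fin.castSucc_injective _ (D.vertex_injective h)
    exact absurd hl (this ▸ hk)
  · rw [(D.step_backward l hl).1] at h
    have := congrArg Fin.val (D.vertex_injective h)
    simp only [Fin.val_succ, Fin.val_castSucc] at this
    exact ⟨this, hl⟩

/-- Two consecutive arrows of a diagram that run in the same direction are consecutive on their
`A`-cycle. -/
theorem next_eq {a b : Γ.Arrow} (ha : a ∈ D.arrows) (hb : b ∈ D.arrows) (h : tgt a = src b) :
    Γ.next a = b := by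
  obtain ⟨k, rfl⟩ := ha
  obtain ⟨l, rfl⟩ := hb
  refine arrow_ext h ((Γ.next_fst _).trans ?_)
  by_cases hk : D.forward k
  · obtain ⟨hkl, hl⟩ := D.forward_succ hk h
    exact (D.turn k l hkl).1 (iff_of_true hk hl)
  · obtain ⟨hkl, hl⟩ := D.backward_succ hk h
    exact ((D.turn l k hkl).1 (iff_of_false hl hk)).symm

/-- A diagram does not contain a whole `A`-cycle. -/
theorem exists_iterate_notMem (a : Γ.Arrow) : ∃ j, Γ.next^[j] a ∉ D.arrows := by
  by_contra! hall
  obtain ⟨k, hk⟩ := hall 0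
  by_cases hf : D.forward k
  · have : ∀ j, ∃ l : Fin D.len, (l : ℕ) = k + j ∧ D.arrow l = Γ.next^[j] a ∧ D.forward l := by
      intro j
      induction j with
      | zero => exact ⟨k, rfl, hk, hf⟩
      | succ j ih =>
        obtain ⟨l, h1, h2, h3⟩ := ih
        obtain ⟨m, hm⟩ := hall (j + 1)
        obtain ⟨h4, h5⟩ := D.forward_succ (k := l) (l := m) h3 (by rw [h2, hm, tgt_iterate])
        exact ⟨m, by omega, hm, h5⟩
    obtain ⟨l, hl, -⟩ := this D.len
    have := l.2
    omega
  · have : ∀ j, ∃ l : Fin D.len, (l : ℕ) + j = k ∧ D.arrow l = Γ.next^[j] a ∧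
        ¬ D.forward l := by
      intro j
      induction j with
      | zero => exact ⟨k, rfl, hk, hf⟩
      | succ j ih =>
        obtain ⟨l, h1, h2, h3⟩ := ih
        obtain ⟨m, hm⟩ := hall (j + 1)
        obtain ⟨h4, h5⟩ := D.backward_succ (k := l) (l := m) h3 (by rw [h2, hm, tgt_iterate])
        exact ⟨m, by omega, hm, h5⟩
    obtain ⟨l, hl, -⟩ := this (k + 1)
    omega

/-- A diagram does not contain a closed sequence of consecutive arrows. -/
theorem exists_lt_iterate_notMem (a : Γ.Arrow) {n : ℕ} (hn : 0 < n) (h : Γ.next^[n] a = a) :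
    ∃ j < n, Γ.next^[j] a ∉ D.arrows := by
  obtain ⟨j, hj⟩ := D.exists_iterate_notMem a
  refine ⟨j % n, Nat.mod_lt _ hn, ?_⟩
  have : Function.IsPeriodicPt Γ.next n a := h
  rwa [this.iterate_mod_apply]

/-- `D` contains a directed path from `x` to `y` along the `A`-cycle of `u`. -/
def HasArc (u : V) (x y : Γ.Vertex) : Prop :=
  ∃ (a : Γ.Arrow) (n : ℕ), a.fst = u ∧ 0 < n ∧ src a = x ∧ src (Γ.next^[n] a) = y ∧
    ∀ k < n, Γ.next^[k] a ∈ D.arrows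

variable {D} in
theorem HasArc.left_mem {u : V} {x y : Γ.Vertex} (h : D.HasArc u x y) : u ∈ x.1 := by
  obtain ⟨a, n, rfl, hn, rfl, rfl, ha⟩ := h
  exact fst_mem_src a

variable {D} in
theorem HasArc.right_mem {u : V} {x y : Γ.Vertex} (h : D.HasArc u x y) : u ∈ y.1 := by
  obtain ⟨a, n, rfl, hn, rfl, rfl, ha⟩ := h
  rw [← fst_iterate a n]
  exact fst_mem_src _

/-- A common path along an `A`-cycle lies in one component of the intersection. -/
theorem reachable_of_hasArc {u : V} (x y : ↥(D.verts ∩ D'.verts)) (h : D.HasArc u x.1 y.1)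
    (h' : D'.HasArc u x.1 y.1) : (D.inter D').Reachable x y := by
  have key : ∀ (a : Γ.Arrow) (n : ℕ) (x y : ↥(D.verts ∩ D'.verts)), src a = x.1 →
      src (Γ.next^[n] a) = y.1 → (∀ k < n, Γ.next^[k] a ∈ D.arrows ∩ D'.arrows) →
      (D.inter D').Reachable x y := by
    intro a n
    induction n with
    | zero =>
      intro x y hx hy _
      rw [Subtype.ext (hx.symm.trans hy)]
    | succ n ih =>
      intro x y hx hy hk
      have hn := hk n (Nat.lt_succ_self n)
      let z : ↥(D.verts ∩ D'.verts) :=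
        ⟨src (Γ.next^[n] a), D.src_mem_verts hn.1, D'.src_mem_verts hn.2⟩
      refine (ih x z hx rfl fun k hkn => hk k (by omega)).trans ?_
      by_cases hzy : z = y
      · rw [hzy]
      · refine SimpleGraph.Adj.reachable ?_
        rw [inter, SimpleGraph.fromRel_adj]
        exact ⟨hzy, Or.inl ⟨_, hn, rfl, (tgt_iterate a n).trans hy⟩⟩
  obtain ⟨a, n, hau, hn, hax, hay, ha⟩ := h
  obtain ⟨b, m, hbu, hm, hbx, hby, hb⟩ := h'
  obtain rfl : a = b := arrow_ext (hax.trans hbx.symm) (hau.trans hbu.symm)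
  rcases le_total n m with hnm | hnm
  · exact key a n x y hax hay fun k hk => ⟨ha k hk, hb k (by omega)⟩
  · exact key a m x y hbx hby fun k hk => ⟨ha k (by omega), hb k hk⟩

/-- A path along an `A`-cycle that starts in a source of `D`, ends in a sink of `D'` and is part
of both diagrams; moreover `D'` contains the arrow `a` of the cycle before the path, and `D` the
arrow after it. -/
structure Overlap (a : Γ.Arrow) (m : ℕ) : Prop where
  source : src (Γ.next a) ∈ D.sources
  sink : src (Γ.next^[m + 1] a) ∈ D'.sinks
  mem_left : ∀ j ≤ m, Γ.next^[j + 1] a ∈ D.arrows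
  mem_right : ∀ j ≤ m, Γ.next^[j] a ∈ D'.arrows

/-- Diagrams that contain complementary parts of an `A`-cycle overlap. -/
theorem exists_overlap_of_hasArc {u : V} {x y : Γ.Vertex} (h : D.HasArc u x y)
    (h' : D'.HasArc u y x) : ∃ a m, D.Overlap D' a m := by
  classical
  obtain ⟨a, n, hau, hn, hax, hay, ha⟩ := h
  obtain ⟨b, m, hbu, hm, hby, hbx, hb⟩ := h'
  have hab : Γ.next^[n] a = b :=
    arrow_ext (hay.trans hby.symm) ((fst_iterate a n).trans (hau.trans hbu.symm))
  have hba : Γ.next^[m] b = a :=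
    arrow_ext (hbx.trans hax.symm) ((fst_iterate b m).trans (hbu.trans hau.symm))
  have hiter : ∀ k, Γ.next^[k + m] b = Γ.next^[k] a := fun k => by
    rw [Function.iterate_add_apply, hba]
  have hiter' : ∀ k, Γ.next^[k + n] a = Γ.next^[k] b := fun k => by
    rw [Function.iterate_add_apply, hab]
  have hexq : ∃ q, ∀ j, q ≤ j → j < m → Γ.next^[j] b ∈ D.arrows :=
    ⟨m, fun j h1 h2 => absurd h1 (by omega)⟩
  obtain ⟨q, hq, hqmin⟩ : ∃ q, (∀ j, q ≤ j → j < m → Γ.next^[j] b ∈ D.arrows) ∧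
      ∀ q' < q, ¬ ∀ j, q' ≤ j → j < m → Γ.next^[j] b ∈ D.arrows :=
    ⟨Nat.find hexq, Nat.find_spec hexq, fun q' hq' => Nat.find_min hexq hq'⟩
  have hqm : q ≤ m := by
    by_contra! hlt
    exact hqmin m hlt fun j h1 h2 => absurd h1 (by omega)
  have hq0 : q ≠ 0 := by
    rintro rfl
    obtain ⟨j, hj, hjD⟩ := D.exists_lt_iterate_notMem a (n := m + n) (by omega)
      (by rw [hiter', hba])
    refine hjD ?_
    rcases lt_or_ge j n with hjn | hjn
    · exact ha j hjn
    · obtain ⟨i, rfl⟩ := Nat.exists_eq_add_of_le' hjn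
      rw [hiter']
      exact hq i (Nat.zero_le _) (by omega)
  obtain ⟨p, rfl⟩ := Nat.exists_eq_succ_of_ne_zero hq0
  have hp : Γ.next^[p] b ∉ D.arrows := fun hpD => hqmin p (Nat.lt_succ_self p) fun j h1 h2 => by
    rcases h1.eq_or_lt with rfl | h1
    · exact hpD
    · exact hq j h1 h2
  obtain ⟨r, hr, hrmin⟩ : ∃ r, Γ.next^[r] a ∉ D'.arrows ∧
      ∀ r' < r, Γ.next^[r'] a ∈ D'.arrows :=
    ⟨Nat.find (D'.exists_iterate_notMem a), Nat.find_spec (D'.exists_iterate_notMem a),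
      fun r' hr' => not_not.1 (Nat.find_min (D'.exists_iterate_notMem a) hr')⟩
  have hrn : r < n := by
    by_contra! hle
    obtain ⟨j, hj, hjD⟩ := D'.exists_lt_iterate_notMem b (n := n + m) (by omega)
      (by rw [hiter, hab])
    refine hjD ?_
    rcases lt_or_ge j m with hjm | hjm
    · exact hb j hjm
    · obtain ⟨i, rfl⟩ := Nat.exists_eq_add_of_le' hjm
      rw [hiter]
      exact hrmin i (by omega)
  have hD : ∀ j ≤ m - (p + 1) + r, Γ.next^[j + 1] (Γ.next^[p] b) ∈ D.arrows := by
    intro j hj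
    rw [← Function.iterate_add_apply]
    rcases lt_or_ge (j + 1 + p) m with h1 | h1
    · exact hq _ (by omega) h1
    · obtain ⟨i, hi⟩ := Nat.exists_eq_add_of_le' h1
      rw [hi, hiter]
      exact ha i (by omega)
  have hD' : ∀ j ≤ m - (p + 1) + r, Γ.next^[j] (Γ.next^[p] b) ∈ D'.arrows := by
    intro j hj
    rw [← Function.iterate_add_apply]
    rcases lt_or_ge (j + p) m with h1 | h1
    · exact hb _ h1
    · obtain ⟨i, hi⟩ := Nat.exists_eq_add_of_le' h1
      rw [hi, hiter]
      exact hrmin i (by omega)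
  have hlast : Γ.next^[m - (p + 1) + r + 1] (Γ.next^[p] b) = Γ.next^[r] a := by
    rw [← Function.iterate_add_apply, ← hiter,
      show m - (p + 1) + r + 1 + p = r + m by omega]
  refine ⟨Γ.next^[p] b, m - (p + 1) + r, ⟨D.src_mem_verts (hD 0 (Nat.zero_le _)), ?_⟩,
    ⟨?_, ?_⟩, hD, hD'⟩
  · intro c hc hct
    have := D.next_eq hc (hD 0 (Nat.zero_le _)) hct
    rw [Function.iterate_succ_apply', Function.iterate_zero_apply] at this
    exact hp (Γ.next.injective this ▸ hc)
  · rw [← tgt_iterate]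
    exact D'.tgt_mem_verts (hD' _ le_rfl)
  · intro c hc hcs
    have := D'.next_eq (hD' _ le_rfl) hc ((tgt_iterate _ _).trans hcs.symm)
    rw [← Function.iterate_succ_apply' Γ.next, hlast] at this
    exact hr (this ▸ hc)

/-- The edges on a part of a diagram lie on the same side of any edge that is not there. -/
theorem reachable_of_segment (e : Γ.Vertex) {i j : ℕ} (hij : i ≤ j) (hj : j < D.len + 1)
    (he : ∀ k (hk : k < D.len + 1), i ≤ k → k ≤ j → D.vertex ⟨k, hk⟩ ≠ e) :
    ∀ p ∈ (D.vertex ⟨i, by omega⟩).1, ∀ q ∈ (D.vertex ⟨j, hj⟩).1,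
      (Γ.graph.deleteEdges {e.1}).Reachable p q := by
  induction j, hij using Nat.le_induction with
  | base =>
    intro p hp q hq
    exact reachable_deleteEdges (he i hj le_rfl le_rfl) (he i hj le_rfl le_rfl) hp hp hp hq
  | succ j hij ih =>
    intro p hp q hq
    have hjl : j < D.len := by omega
    obtain ⟨h1, h2⟩ := D.fst_mem_vertex ⟨j, hjl⟩
    refine (ih (by omega) (fun k hk h3 h4 => he k hk h3 (by omega)) p hp _ h1).trans ?_
    exact reachable_deleteEdges (he (j + 1) hj (by omega) le_rfl)
      (he (j + 1) hj (by omega) le_rfl) h2 h2 h2 hq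

/-- If a part of a diagram changes the `A`-cycle at `e`, then its ends lie on different sides of
the edge `e`. -/
theorem fst_eq_of_reachable {i j k : ℕ} (hik : i ≤ k) (hkj : k + 1 < j) (hj : j < D.len + 1)
    {p q : V} (hp : p ∈ (D.vertex ⟨i, by omega⟩).1) (hq : q ∈ (D.vertex ⟨j, hj⟩).1)
    (hpq : (Γ.graph.deleteEdges {(D.vertex ⟨k + 1, by omega⟩).1}).Reachable p q) :
    (D.arrow ⟨k, by omega⟩).fst = (D.arrow ⟨k + 1, by omega⟩).fst := by
  by_contra hne
  have hne' : ∀ l (hl : l < D.len + 1), l ≠ k + 1 →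
      D.vertex ⟨l, hl⟩ ≠ D.vertex ⟨k + 1, by omega⟩ := fun l hl hlk h =>
    hlk (congrArg Fin.val (D.vertex_injective h))
  obtain ⟨h1, h2⟩ := D.fst_mem_vertex ⟨k, by omega⟩
  obtain ⟨h3, h4⟩ := D.fst_mem_vertex ⟨k + 1, by omega⟩
  have r1 := D.reachable_of_segment (D.vertex ⟨k + 1, by omega⟩) hik (by omega)
    (fun l hl h5 h6 => hne' l hl (by omega)) p hp _ h1
  have r2 := D.reachable_of_segment (D.vertex ⟨k + 1, by omega⟩) (i := k + 2) (j := j) (by omega)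
    hj (fun l hl h5 h6 => hne' l hl (by omega)) _ h4 q hq
  have he := (Sym2.mem_and_mem_iff hne).1 ⟨h2, h3⟩
  have hbr := SimpleGraph.isAcyclic_iff_forall_isBridge.1 Γ.isTree.isAcyclic
    (D.vertex ⟨k + 1, by omega⟩).2
  have hr := r1.symm.trans (hpq.trans r2.symm)
  simp only [Fin.succ_mk] at he
  rw [he, SimpleGraph.isBridge_iff] at hbr
  rw [he] at hr
  exact hbr hr

/-- A part of a diagram on one `A`-cycle is a directed path. -/
theorem hasArc_of_fst_eq {u : V} {i j : ℕ} (hij : i < j) (hj : j < D.len + 1)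
    (h : ∀ k (hk : k < D.len), i ≤ k → k < j → (D.arrow ⟨k, hk⟩).fst = u) :
    D.HasArc u (D.vertex ⟨i, by omega⟩) (D.vertex ⟨j, hj⟩) ∨
      D.HasArc u (D.vertex ⟨j, hj⟩) (D.vertex ⟨i, by omega⟩) := by
  by_cases hf : D.forward ⟨i, by omega⟩
  · left
    have key : ∀ n (hn : i + n < j), D.forward ⟨i + n, by omega⟩ ∧
        D.arrow ⟨i + n, by omega⟩ = Γ.next^[n] (D.arrow ⟨i, by omega⟩) := by
      intro n
      induction n with
      | zero => exact fun _ => ⟨hf, rfl⟩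
      | succ n ih =>
        intro hn
        obtain ⟨h1, h2⟩ := ih (by omega)
        have h3 : D.forward ⟨i + (n + 1), by omega⟩ :=
          ((D.turn ⟨i + n, by omega⟩ ⟨i + (n + 1), by omega⟩ rfl).2
            ((h _ _ (by omega) (by omega)).trans (h _ _ (by omega) (by omega)).symm)).1 h1
        refine ⟨h3, ?_⟩
        rw [Function.iterate_succ_apply', ← h2]
        refine (D.next_eq ⟨_, rfl⟩ ⟨_, rfl⟩ ?_).symm
        rw [(D.step_forward _ h1).2, (D.step_forward _ h3).1]
        rfl
    obtain ⟨n, rfl⟩ := Nat.exists_eq_add_of_lt hij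
    refine ⟨D.arrow ⟨i, by omega⟩, n + 1, h _ _ le_rfl hij, by omega,
      (D.step_forward _ hf).1, ?_, fun k hk => ?_⟩
    · obtain ⟨h1, h2⟩ := key n (by omega)
      rw [← tgt_iterate, ← h2, (D.step_forward _ h1).2]
      rfl
    · rw [← (key k (by omega)).2]
      exact ⟨_, rfl⟩
  · right
    obtain ⟨n, rfl⟩ := Nat.exists_eq_add_of_lt hij
    have hb : ∀ l (hl : l ≤ n), ¬ D.forward ⟨i + l, by omega⟩ := by
      intro l
      induction l with
      | zero => exact fun _ => hf
      | succ l ih =>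
        intro hl h3
        exact ih (by omega) (((D.turn ⟨i + l, by omega⟩ ⟨i + (l + 1), by omega⟩ rfl).2
            ((h _ _ (by omega) (by omega)).trans (h _ _ (by omega) (by omega)).symm)).2 h3)
    have key : ∀ l (hl : l ≤ n),
        D.arrow ⟨i + (n - l), by omega⟩ = Γ.next^[l] (D.arrow ⟨i + n, by omega⟩) := by
      intro l
      induction l with
      | zero => exact fun _ => rfl
      | succ l ih =>
        intro hl
        rw [Function.iterate_succ_apply', ← ih (by omega)]
        refine (D.next_eq ⟨_, rfl⟩ ⟨_, rfl⟩ ?_).symm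
        rw [(D.step_backward _ (hb _ (by omega))).2, (D.step_backward _ (hb _ (by omega))).1]
        congr 1
        ext
        simp
        omega
    refine ⟨D.arrow ⟨i + n, by omega⟩, n + 1, h _ _ (by omega) (by omega), by omega,
      (D.step_backward _ (hb n le_rfl)).1, ?_, fun k hk => ?_⟩
    · rw [← tgt_iterate, ← key n le_rfl, (D.step_backward _ (hb _ (by omega))).2]
      congr 1
      ext
      simp
    · rw [← key k (by omega)]
      exact ⟨_, rfl⟩

/-- A part of `D` that is joined by a part of `D'` without meeting it in between runs along one
`A`-cycle. -/
theorem hasArc_of_segments {i j : ℕ} (hij : i < j) (hj : j < D.len + 1) {i' j' : ℕ}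
    (hij' : i' ≤ j') (hj' : j' < D'.len + 1)
    (hends : (D.vertex ⟨i, by omega⟩ = D'.vertex ⟨i', by omega⟩ ∧
        D.vertex ⟨j, hj⟩ = D'.vertex ⟨j', hj'⟩) ∨
      (D.vertex ⟨i, by omega⟩ = D'.vertex ⟨j', hj'⟩ ∧
        D.vertex ⟨j, hj⟩ = D'.vertex ⟨i', by omega⟩))
    (hdisj : ∀ k (hk : k < D.len + 1), i < k → k < j → ∀ k' (hk' : k' < D'.len + 1),
      i' < k' → k' < j' → D.vertex ⟨k, hk⟩ ≠ D'.vertex ⟨k', hk'⟩) :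
    ∃ u, D.HasArc u (D.vertex ⟨i, by omega⟩) (D.vertex ⟨j, hj⟩) ∨
      D.HasArc u (D.vertex ⟨j, hj⟩) (D.vertex ⟨i, by omega⟩) := by
  have hconst : ∀ k, i ≤ k → ∀ hkj : k + 1 < j,
      (D.arrow ⟨k, by omega⟩).fst = (D.arrow ⟨k + 1, by omega⟩).fst := by
    intro k hik hkj
    have hD : ∀ l (hl : l < D.len + 1), l ≠ k + 1 →
        D.vertex ⟨l, hl⟩ ≠ D.vertex ⟨k + 1, by omega⟩ := fun l hl hlk h =>
      hlk (congrArg Fin.val (D.vertex_injective h))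
    have hi' : D'.vertex ⟨i', by omega⟩ ≠ D.vertex ⟨k + 1, by omega⟩ := by
      rcases hends with ⟨h1, h2⟩ | ⟨h1, h2⟩
      · rw [← h1]; exact hD _ _ (by omega)
      · rw [← h2]; exact hD _ _ (by omega)
    have hj'' : D'.vertex ⟨j', hj'⟩ ≠ D.vertex ⟨k + 1, by omega⟩ := by
      rcases hends with ⟨h1, h2⟩ | ⟨h1, h2⟩
      · rw [← h2]; exact hD _ _ (by omega)
      · rw [← h1]; exact hD _ _ (by omega)
    have hseg := D'.reachable_of_segment (D.vertex ⟨k + 1, by omega⟩) hij' hj' (by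
      intro l hl h1 h2
      rcases h1.eq_or_lt with rfl | h1
      · exact hi'
      rcases h2.eq_or_lt with rfl | h2
      · exact hj''
      · exact (hdisj (k + 1) _ (by omega) hkj l hl h1 h2).symm)
    rcases hends with ⟨h1, h2⟩ | ⟨h1, h2⟩
    · rw [← h1, ← h2] at hseg
      exact D.fst_eq_of_reachable hik hkj hj (Sym2.out_fst_mem _) (Sym2.out_fst_mem _)
        (hseg _ (Sym2.out_fst_mem _) _ (Sym2.out_fst_mem _))
    · rw [← h1, ← h2] at hseg
      exact D.fst_eq_of_reachable hik hkj hj (Sym2.out_fst_mem _) (Sym2.out_fst_mem _)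
        (hseg _ (Sym2.out_fst_mem _) _ (Sym2.out_fst_mem _)).symm
  refine ⟨(D.arrow ⟨i, by omega⟩).fst, D.hasArc_of_fst_eq hij hj ?_⟩
  intro k hk hik
  induction k, hik using Nat.le_induction with
  | base => exact fun _ => rfl
  | succ k hik ih => exact fun hkj => (hconst k hik hkj).symm.trans (ih (by omega) (by omega))

/-- Diagrams whose intersection is not connected overlap. -/
theorem exists_overlap (h : Nontrivial (D.inter D').ConnectedComponent) :
    ∃ a m, D.Overlap D' a m := by
  have hmin : ∀ n i j (hij : i < j) (hj : j < D.len + 1), j - i = n →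
      ∀ (hi' : D.vertex ⟨i, by omega⟩ ∈ D'.verts) (hj' : D.vertex ⟨j, hj⟩ ∈ D'.verts),
      ¬ (D.inter D').Reachable ⟨D.vertex ⟨i, by omega⟩, ⟨_, rfl⟩, hi'⟩
        ⟨D.vertex ⟨j, hj⟩, ⟨_, rfl⟩, hj'⟩ → ∃ a m, D.Overlap D' a m := by
    intro n
    induction n using Nat.strong_induction_on with
    | _ n ih =>
    intro i j hij hj hn hi' hj' hreach
    by_cases hbetween : ∃ k, ∃ hk : k < D.len + 1, i < k ∧ k < j ∧ D.vertex ⟨k, hk⟩ ∈ D'.verts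
    · obtain ⟨k, hk, hik, hkj, hkD⟩ := hbetween
      by_cases hr : (D.inter D').Reachable ⟨D.vertex ⟨i, by omega⟩, ⟨_, rfl⟩, hi'⟩
          ⟨D.vertex ⟨k, hk⟩, ⟨_, rfl⟩, hkD⟩
      · exact ih (j - k) (by omega) k j hkj hj rfl hkD hj' fun h => hreach (hr.trans h)
      · exact ih (k - i) (by omega) i k hik hk rfl hi' hkD hr
    push Not at hbetween
    have hne : D.vertex ⟨i, by omega⟩ ≠ D.vertex ⟨j, hj⟩ := fun h =>
      hij.ne (congrArg Fin.val (D.vertex_injective h))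
    obtain ⟨⟨i', hi'l⟩, hi'e⟩ := id hi'
    obtain ⟨⟨j', hj'l⟩, hj'e⟩ := id hj'
    have hdisj : ∀ k (hk : k < D.len + 1), i < k → k < j → ∀ k' (hk' : k' < D'.len + 1),
        D.vertex ⟨k, hk⟩ ≠ D'.vertex ⟨k', hk'⟩ := fun k hk h1 h2 k' hk' h =>
      hbetween k hk h1 h2 ⟨_, h.symm⟩
    obtain ⟨u, hu⟩ : ∃ u, D.HasArc u (D.vertex ⟨i, by omega⟩) (D.vertex ⟨j, hj⟩) ∨
        D.HasArc u (D.vertex ⟨j, hj⟩) (D.vertex ⟨i, by omega⟩) := by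
      rcases le_total i' j' with hle | hle
      · exact D.hasArc_of_segments D' hij hj hle hj'l (Or.inl ⟨hi'e.symm, hj'e.symm⟩)
          fun k hk h1 h2 k' hk' _ _ => hdisj k hk h1 h2 k' hk'
      · exact D.hasArc_of_segments D' hij hj hle hi'l (Or.inr ⟨hi'e.symm, hj'e.symm⟩)
          fun k hk h1 h2 k' hk' _ _ => hdisj k hk h1 h2 k' hk'
    obtain ⟨u', hu'⟩ : ∃ u, D'.HasArc u (D.vertex ⟨i, by omega⟩) (D.vertex ⟨j, hj⟩) ∨
        D'.HasArc u (D.vertex ⟨j, hj⟩) (D.vertex ⟨i, by omega⟩) := by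
      rcases lt_trichotomy i' j' with hlt | heq | hlt
      · rw [← hi'e, ← hj'e]
        exact D'.hasArc_of_segments D hlt hj'l hij.le hj (Or.inl ⟨hi'e, hj'e⟩)
          fun k' hk' _ _ k hk h1 h2 => (hdisj k hk h1 h2 k' hk').symm
      · subst heq
        exact absurd (hi'e.symm.trans hj'e) hne
      · rw [← hi'e, ← hj'e]
        obtain ⟨u, hu⟩ := D'.hasArc_of_segments D hlt hi'l hij.le hj (Or.inr ⟨hj'e, hi'e⟩)
          fun k' hk' _ _ k hk h1 h2 => (hdisj k hk h1 h2 k' hk').symm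
        exact ⟨u, hu.symm⟩
    have hui : u ∈ (D.vertex ⟨i, by omega⟩).1 := hu.elim HasArc.left_mem HasArc.right_mem
    have huj : u ∈ (D.vertex ⟨j, hj⟩).1 := hu.elim HasArc.right_mem HasArc.left_mem
    have hui' : u' ∈ (D.vertex ⟨i, by omega⟩).1 := hu'.elim HasArc.left_mem HasArc.right_mem
    have huj' : u' ∈ (D.vertex ⟨j, hj⟩).1 := hu'.elim HasArc.right_mem HasArc.left_mem
    obtain rfl : u = u' := by
      by_contra hneu
      exact hne (Subtype.ext (((Sym2.mem_and_mem_iff hneu).1 ⟨hui, hui'⟩).trans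
        ((Sym2.mem_and_mem_iff hneu).1 ⟨huj, huj'⟩).symm))
    rcases hu with hu | hu <;> rcases hu' with hu' | hu'
    · exact absurd (D.reachable_of_hasArc D' ⟨_, ⟨_, rfl⟩, hi'⟩ ⟨_, ⟨_, rfl⟩, hj'⟩ hu hu') hreach
    · exact D.exists_overlap_of_hasArc D' hu hu'
    · exact D.exists_overlap_of_hasArc D' hu hu'
    · exact absurd (D.reachable_of_hasArc D' ⟨_, ⟨_, rfl⟩, hj'⟩ ⟨_, ⟨_, rfl⟩, hi'⟩ hu hu').symm
        hreach
  obtain ⟨c, d, hcd⟩ := h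
  induction c using SimpleGraph.ConnectedComponent.ind with | _ x => ?_
  induction d using SimpleGraph.ConnectedComponent.ind with | _ y => ?_
  rw [Ne, SimpleGraph.ConnectedComponent.eq] at hcd
  obtain ⟨_, ⟨⟨i, hi⟩, rfl⟩, hx⟩ := x
  obtain ⟨_, ⟨⟨j, hj⟩, rfl⟩, hy⟩ := y
  rcases lt_trichotomy i j with hlt | rfl | hlt
  · exact hmin _ i j hlt hj rfl hx hy hcd
  · exact absurd (SimpleGraph.Reachable.refl _) hcd
  · exact hmin _ j i hlt hi rfl hy hx fun h => hcd h.symm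

end Diagram

end Combinatorics

end BrauerTree

namespace BrauerTree

section Algebra

variable {V : Type v} (Γ : BrauerTree V) (K : Type u) [Field K]

/-- The quotient map onto `A`. -/
noncomputable def mkAlg : FreeAlgebra K Γ.Gen →ₐ[K] Γ.Alg K := RingQuot.mkAlgHom K (Rel Γ K)

theorem mkAlg_rel {f g : FreeAlgebra K Γ.Gen} (h : Rel Γ K f g) : mkAlg Γ K f = mkAlg Γ K g :=
  RingQuot.mkAlgHom_rel K h

theorem mkAlg_surjective : Function.Surjective (mkAlg Γ K) :=
  RingQuot.mkAlgHom_surjective K (Rel Γ K)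

/-- The arrow `a`, as an element of `A`. -/
noncomputable def arr (a : Γ.Arrow) : Γ.Alg K := mkAlg Γ K (freeArrow Γ K a)

/-- The product of `k` consecutive arrows that begin with `a`, as an element of `A`. -/
noncomputable def arc (a : Γ.Arrow) (k : ℕ) : Γ.Alg K :=
  mkAlg Γ K (freeArc Γ K a k)

theorem arc_zero (a : Γ.Arrow) : arc Γ K a 0 = idem Γ K (src a) := rfl

theorem arc_succ (a : Γ.Arrow) (k : ℕ) :
    arc Γ K a (k + 1) = arr Γ K a * arc Γ K (Γ.next a) k :=
  map_mul (mkAlg Γ K) _ _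

theorem idem_mul_self (x : Γ.Vertex) : idem Γ K x * idem Γ K x = idem Γ K x :=
  (map_mul (mkAlg Γ K) _ _).symm.trans
    (mkAlg_rel Γ K (Rel.idem x))

theorem idem_mul_of_ne {x y : Γ.Vertex} (h : x ≠ y) : idem Γ K x * idem Γ K y = 0 :=
  (map_mul (mkAlg Γ K) _ _).symm.trans
    ((mkAlg_rel Γ K (Rel.orth x y h)).trans (map_zero _))

theorem idem_src_mul_arr (a : Γ.Arrow) : idem Γ K (src a) * arr Γ K a = arr Γ K a :=
  (map_mul (mkAlg Γ K) _ _).symm.trans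
    (mkAlg_rel Γ K (Rel.src_mul a))

theorem arr_mul_idem_tgt (a : Γ.Arrow) : arr Γ K a * idem Γ K (tgt a) = arr Γ K a :=
  (map_mul (mkAlg Γ K) _ _).symm.trans
    (mkAlg_rel Γ K (Rel.mul_tgt a))

theorem arr_mul_arr_symm (a : Γ.Arrow) : arr Γ K a * arr Γ K (Γ.next a).symm = 0 :=
  (map_mul (mkAlg Γ K) _ _).symm.trans
    ((mkAlg_rel Γ K (Rel.change a)).trans (map_zero _))

theorem arc_full (a : Γ.Arrow) : arc Γ K a (Function.minimalPeriod Γ.next a) =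
    arc Γ K a.symm (Function.minimalPeriod Γ.next a.symm) :=
  mkAlg_rel Γ K (Rel.full a)

theorem sum_idem [Fintype Γ.Vertex] : ∑ x : Γ.Vertex, idem Γ K x = 1 := by
  have := mkAlg_rel Γ K (Rel.sum_idem (Γ := Γ) (K := K))
  rw [finsum_eq_sum_of_fintype, map_sum, map_one] at this
  exact this

theorem idem_src_mul_arc (a : Γ.Arrow) (k : ℕ) :
    idem Γ K (src a) * arc Γ K a k = arc Γ K a k := by
  cases k with
  | zero => exact idem_mul_self Γ K _
  | succ k => rw [arc_succ, ← mul_assoc, idem_src_mul_arr]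

theorem arc_mul_idem (a : Γ.Arrow) (k : ℕ) :
    arc Γ K a k * idem Γ K (src (Γ.next^[k] a)) = arc Γ K a k := by
  induction k generalizing a with
  | zero => exact idem_mul_self Γ K _
  | succ k ih => rw [arc_succ, mul_assoc, Function.iterate_succ_apply, ih]

theorem arc_one (a : Γ.Arrow) : arc Γ K a 1 = arr Γ K a := by
  rw [arc_succ, arc_zero]
  exact arr_mul_idem_tgt Γ K a

theorem arc_add (a : Γ.Arrow) (k l : ℕ) :
    arc Γ K a (k + l) = arc Γ K a k * arc Γ K (Γ.next^[k] a) l := by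
  induction k generalizing a with
  | zero => rw [Nat.zero_add, arc_zero, Function.iterate_zero_apply, idem_src_mul_arc]
  | succ k ih =>
    rw [Nat.add_right_comm, arc_succ, arc_succ, ih, mul_assoc, Function.iterate_succ_apply]

/-- A path that changes the `A`-cycle vanishes. -/
theorem arc_mul_arc_symm (a : Γ.Arrow) {k l : ℕ} (hk : 0 < k) (hl : 0 < l) :
    arc Γ K a k * arc Γ K (Γ.next^[k] a).symm l = 0 := by
  obtain ⟨k, rfl⟩ := Nat.exists_eq_add_of_lt hk
  obtain ⟨l, rfl⟩ := Nat.exists_eq_add_of_lt hl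
  rw [Nat.zero_add, Nat.zero_add, arc_add, arc_one, arc_succ, mul_assoc, ← mul_assoc (arr Γ K _),
    Function.iterate_succ_apply', arr_mul_arr_symm, zero_mul, mul_zero]

instance finite_arrow [Finite V] : Finite Γ.Arrow :=
  Finite.of_injective _ SimpleGraph.Dart.toProd_injective

theorem minimalPeriod_next_pos [Finite V] (a : Γ.Arrow) :
    0 < Function.minimalPeriod Γ.next a :=
  Function.minimalPeriod_pos_of_mem_periodicPts (Γ.next.injective.mem_periodicPts a)

/-- A path longer than the full cycle vanishes. -/
theorem arc_eq_zero [Finite V] (a : Γ.Arrow) {n : ℕ} (hn : Function.minimalPeriod Γ.next a < n) :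
    arc Γ K a n = 0 := by
  obtain ⟨l, rfl⟩ := Nat.exists_eq_add_of_lt hn
  have h := arc_mul_arc_symm Γ K a.symm (minimalPeriod_next_pos Γ a.symm) (Nat.succ_pos l)
  rw [Function.iterate_minimalPeriod, SimpleGraph.Dart.symm_symm, ← arc_full] at h
  rwa [add_assoc, arc_add, Function.iterate_minimalPeriod]

theorem exists_src_eq (x : Γ.Vertex) : ∃ a : Γ.Arrow, src a = x := by
  obtain ⟨⟨p, q⟩, h⟩ := x
  exact ⟨⟨(p, q), h⟩, rfl⟩

theorem span_arc_eq_top [Finite V] :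
    Submodule.span K (Set.range fun p : Γ.Arrow × ℕ => arc Γ K p.1 p.2) = ⊤ := by
  set S := Submodule.span K (Set.range fun p : Γ.Arrow × ℕ => arc Γ K p.1 p.2) with hS
  have hmem : ∀ a k, arc Γ K a k ∈ S := fun a k => Submodule.subset_span ⟨(a, k), rfl⟩
  have hone : (1 : Γ.Alg K) ∈ S := by
    have : Fintype Γ.Vertex := Fintype.ofFinite _
    rw [← sum_idem]
    refine Submodule.sum_mem _ fun x _ => ?_
    obtain ⟨a, rfl⟩ := exists_src_eq Γ x
    exact hmem a 0
  have hidem : ∀ x a k, idem Γ K x * arc Γ K a k ∈ S := by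
    intro x a k
    by_cases h : x = src a
    · rw [h, idem_src_mul_arc]
      exact hmem a k
    · rw [← idem_src_mul_arc, ← mul_assoc, idem_mul_of_ne Γ K h, zero_mul]
      exact S.zero_mem
  have harr : ∀ b a k, arr Γ K b * arc Γ K a k ∈ S := by
    intro b a k
    by_cases h : tgt b = src a
    · rcases src_eq_src_iff.1 h.symm with rfl | rfl
      · rw [← arc_succ]
        exact hmem b (k + 1)
      · rcases Nat.eq_zero_or_pos k with rfl | hk
        · rw [arc_zero, src_symm, ← arc_zero, ← arc_succ]
          exact hmem b 1
        · have := arc_mul_arc_symm Γ K b one_pos hk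
          rw [arc_one] at this
          rw [show arr Γ K b * arc Γ K (Γ.next b).symm k = 0 from this]
          exact S.zero_mem
    · rw [← idem_src_mul_arc, ← arr_mul_idem_tgt, mul_assoc, ← mul_assoc (idem Γ K (tgt b)),
        idem_mul_of_ne Γ K h, zero_mul, mul_zero]
      exact S.zero_mem
  have hspan : ∀ z : Γ.Alg K, (∀ a k, z * arc Γ K a k ∈ S) → ∀ s ∈ S, z * s ∈ S := by
    intro z hz s hs
    induction hs using Submodule.span_induction with
    | mem s hs =>
      obtain ⟨p, rfl⟩ := hs
      exact hz _ _
    | zero => rw [mul_zero]; exact S.zero_mem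
    | add s t _ _ hs ht => rw [mul_add]; exact S.add_mem hs ht
    | smul r s _ hs => rw [mul_smul_comm]; exact S.smul_mem r hs
  have hall : ∀ w : FreeAlgebra K Γ.Gen, ∀ s ∈ S,
      mkAlg Γ K w * s ∈ S := by
    intro w
    induction w using FreeAlgebra.induction with
    | grade0 r =>
      intro s hs
      rw [AlgHom.commutes, ← Algebra.smul_def]
      exact S.smul_mem r hs
    | grade1 g =>
      cases g with
      | vertex x => exact hspan (idem Γ K x) (hidem x)
      | arrow b => exact hspan (arr Γ K b) (harr b)
    | mul y z hy hz =>
      intro s hs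
      rw [map_mul]
      rw [mul_assoc]
      exact hy _ (hz s hs)
    | add y z hy hz =>
      intro s hs
      rw [map_add]
      rw [add_mul]
      exact S.add_mem (hy s hs) (hz s hs)
  refine (Submodule.eq_top_iff').2 fun z => ?_
  obtain ⟨w, rfl⟩ := mkAlg_surjective Γ K z
  simpa using hall w 1 hone

/-- The elements of `e_x A e_y`, for `x ≠ y`, are combinations of nontrivial paths from `x` to
`y`. -/
theorem mem_span_arc [Finite V] {x y : Γ.Vertex} (hxy : x ≠ y) {z : Γ.Alg K}
    (hx : idem Γ K x * z = z) (hy : z * idem Γ K y = z) :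
    z ∈ Submodule.span K {w | ∃ (a : Γ.Arrow) (k : ℕ), 0 < k ∧ src a = x ∧
      src (Γ.next^[k] a) = y ∧ w = arc Γ K a k} := by
  rw [← hy, ← hx]
  have hz : z ∈ Submodule.span K (Set.range fun p : Γ.Arrow × ℕ => arc Γ K p.1 p.2) := by
    rw [span_arc_eq_top]
    trivial
  clear hx hy
  induction hz using Submodule.span_induction with
  | mem s hs =>
    obtain ⟨⟨a, k⟩, rfl⟩ := hs
    dsimp only
    by_cases h1 : x = src a
    · by_cases h2 : src (Γ.next^[k] a) = y
      · refine Submodule.subset_span ⟨a, k, Nat.pos_of_ne_zero ?_, h1.symm, h2, ?_⟩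
        · rintro rfl
          exact hxy (h1.trans h2)
        · rw [h1, idem_src_mul_arc, ← h2, arc_mul_idem]
      · rw [← arc_mul_idem, mul_assoc, mul_assoc, idem_mul_of_ne Γ K h2, mul_zero, mul_zero]
        exact Submodule.zero_mem _
    · rw [← idem_src_mul_arc, ← mul_assoc, idem_mul_of_ne Γ K h1, zero_mul, zero_mul]
      exact Submodule.zero_mem _
  | zero => simp
  | add s t _ _ hs ht => rw [mul_add, add_mul]; exact Submodule.add_mem _ hs ht
  | smul r s _ hs =>
    rw [mul_smul_comm, smul_mul_assoc]
    exact Submodule.smul_mem _ r hs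

end Algebra

section Representation

variable {V : Type v} {Γ : BrauerTree V} (K : Type u) [Field K] (c : Γ.Arrow)

/-! The module `A e_x`, where `x = src c`, on the basis of the nonzero paths that end in `x`.  A
nontrivial path is given by its first arrow, the trivial path by `none`; the arrows `c` and
`c.symm` give the same path, the full cycle. -/

open Classical in
/-- The first arrow of a path, with `c.symm` replaced by `c`. -/
noncomputable def firstArrow (a : Γ.Arrow) : Γ.Arrow := if a = c.symm then c else a

open Classical in
/-- The action of an arrow on a path. -/
noncomputable def arrowAct (a : Γ.Arrow) : Option Γ.Arrow → (Option Γ.Arrow →₀ K)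
  | none => if Γ.next a = c ∨ Γ.next a = c.symm then .single (some (firstArrow c a)) 1 else 0
  | some d => if (a.fst = c.fst ∨ a.fst = c.symm.fst) ∧ Γ.next a = d ∧ d ≠ c ∧ d ≠ c.symm then
      .single (some (firstArrow c a)) 1 else 0

open Classical in
/-- The action of an idempotent on a path. -/
noncomputable def idemAct (x : Γ.Vertex) : Option Γ.Arrow → (Option Γ.Arrow →₀ K)
  | none => if src c = x then .single none 1 else 0
  | some d => if src d = x then .single (some d) 1 else 0

/-- The action of the free algebra on the paths that end in `src c`. -/
noncomputable def freeRep :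
    FreeAlgebra K Γ.Gen →ₐ[K] Module.End K (Option Γ.Arrow →₀ K) :=
  FreeAlgebra.lift K fun
    | .vertex x => Finsupp.linearCombination K (idemAct K c x)
    | .arrow a => Finsupp.linearCombination K (arrowAct K c a)

theorem freeRep_freeIdem (x : Γ.Vertex) (i : Option Γ.Arrow) :
    freeRep K c (freeIdem Γ K x) (.single i 1) = idemAct K c x i := by
  simp [freeRep, freeIdem]

theorem freeRep_freeArrow (a : Γ.Arrow) (i : Option Γ.Arrow) :
    freeRep K c (freeArrow Γ K a) (.single i 1) = arrowAct K c a i := by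
  simp [freeRep, freeArrow]

theorem src_firstArrow (a : Γ.Arrow) : src (firstArrow c a) = src a := by
  unfold firstArrow
  split_ifs with h
  · rw [h, src_symm]
  · rfl

theorem arrowAct_eq_zero_or (a : Γ.Arrow) (i : Option Γ.Arrow) :
    arrowAct K c a i = 0 ∨ arrowAct K c a i = .single (some (firstArrow c a)) 1 := by
  cases i <;> simp only [arrowAct] <;> split_ifs <;> simp

theorem freeRep_freeArc_succ (a : Γ.Arrow) (k : ℕ) (v : Option Γ.Arrow →₀ K) :
    freeRep K c (freeArc Γ K a (k + 1)) v =
      freeRep K c (freeArrow Γ K a) (freeRep K c (freeArc Γ K (Γ.next a) k) v) := by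
  rw [freeArc, map_mul, Module.End.mul_apply]

theorem freeRep_ext {f g : FreeAlgebra K Γ.Gen}
    (h : ∀ i, freeRep K c f (.single i 1) = freeRep K c g (.single i 1)) :
    freeRep K c f = freeRep K c g := by
  ext i : 2
  simpa using h i

theorem src_eq_src_iff_mem {a : Γ.Arrow} : src c = src a ↔ a = c ∨ a = c.symm := by
  rw [eq_comm, src_eq_src_iff]

theorem freeRep_mul_eq_zero {a : Γ.Arrow} (h : Γ.next a = c ∨ Γ.next a = c.symm) :
    freeRep K c (freeArrow Γ K a) (.single (some (firstArrow c (Γ.next a))) 1) = 0 := by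
  rw [freeRep_freeArrow]
  have : firstArrow c (Γ.next a) = c := by
    unfold firstArrow
    rcases h with h | h <;> simp [h]
  simp [arrowAct, this]

/-- A path through `src c` annihilates every nontrivial path. -/
theorem freeRep_freeArc_some {a : Γ.Arrow} {j k : ℕ} (hj : j < k)
    (h : Γ.next^[j + 1] a = c ∨ Γ.next^[j + 1] a = c.symm) (d : Γ.Arrow) :
    freeRep K c (freeArc Γ K a k) (.single (some d) 1) = 0 := by
  induction k generalizing a j with
  | zero => omega
  | succ k ih =>
    rw [freeRep_freeArc_succ]
    cases j with
    | succ j => rw [ih (j := j) (a := Γ.next a) (by omega) h, map_zero]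
    | zero =>
      rw [Nat.zero_add, Function.iterate_one] at h
      cases k with
      | zero =>
        rw [freeArc, freeRep_freeIdem]
        simp only [idemAct]
        split_ifs
        · rw [freeRep_freeArrow]
          simp only [arrowAct]
          rw [if_neg]
          rintro ⟨-, rfl, h1, h2⟩
          exact h.elim h1 h2
        · exact map_zero _
      | succ k =>
        rw [freeRep_freeArc_succ]
        generalize freeRep K c (freeArc Γ K (Γ.next (Γ.next a)) k) (.single (some d) 1) = v
        induction v using Finsupp.induction_linear with
        | zero => simp
        | add f g hf hg => rw [map_add, map_add, hf, hg, add_zero]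
        | single i r =>
          rw [← mul_one r, ← smul_eq_mul, ← Finsupp.smul_single, map_smul, map_smul,
            freeRep_freeArrow]
          rcases arrowAct_eq_zero_or K c (Γ.next a) i with h0 | h0
          · rw [h0, map_zero, smul_zero]
          · rw [h0, freeRep_mul_eq_zero K c h, smul_zero]

theorem freeRep_freeArc_none_eq_zero {a : Γ.Arrow} {k : ℕ}
    (h : ¬ (Γ.next^[k] a = c ∨ Γ.next^[k] a = c.symm)) :
    freeRep K c (freeArc Γ K a k) (.single none 1) = 0 := by
  induction k generalizing a with
  | zero =>
    rw [freeArc, freeRep_freeIdem]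
    simp only [idemAct]
    rw [if_neg]
    rwa [src_eq_src_iff_mem]
  | succ k ih => rw [freeRep_freeArc_succ, ih (a := Γ.next a) h, map_zero]

theorem freeRep_freeArc_none {a : Γ.Arrow} {k : ℕ}
    (h : Γ.next^[k + 1] a = c ∨ Γ.next^[k + 1] a = c.symm)
    (hlt : ∀ j < k, ¬ (Γ.next^[j + 1] a = c ∨ Γ.next^[j + 1] a = c.symm)) :
    freeRep K c (freeArc Γ K a (k + 1)) (.single none 1) =
      .single (some (firstArrow c a)) 1 := by
  induction k generalizing a with
  | zero =>
    rw [freeRep_freeArc_succ, freeArc, freeRep_freeIdem]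
    rw [Nat.zero_add, Function.iterate_one] at h
    simp only [idemAct]
    rw [if_pos ((src_eq_src_iff_mem c).2 h), freeRep_freeArrow]
    simp only [arrowAct]
    rw [if_pos h]
  | succ k ih =>
    rw [freeRep_freeArc_succ,
      ih (a := Γ.next a) h fun j hj => hlt (j + 1) (by omega)]
    have h0 := hlt 0 (by omega)
    rw [Nat.zero_add, Function.iterate_one, not_or] at h0
    have hfst : a.fst = c.fst ∨ a.fst = c.symm.fst := by
      rw [← fst_iterate a (k + 1 + 1)]
      exact h.imp (congrArg fun d : Γ.Arrow => d.fst) (congrArg (fun d : Γ.Arrow => d.fst))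
    rw [freeRep_freeArrow, firstArrow, if_neg h0.2]
    simp only [arrowAct]
    rw [if_pos ⟨hfst, rfl, h0⟩]

theorem exists_iterate_eq [Finite V] {a b : Γ.Arrow} (h : a.fst = b.fst) :
    ∃ j < Function.minimalPeriod Γ.next a, Γ.next^[j + 1] a = b := by
  have : Fintype Γ.Arrow := Fintype.ofFinite _
  classical
  obtain ⟨i, hi⟩ := (Γ.sameCycle (Γ.next a) b ((Γ.next_fst a).trans h)).exists_nat_pow_eq
  refine ⟨i % Function.minimalPeriod Γ.next a, Nat.mod_lt _ (minimalPeriod_next_pos Γ a), ?_⟩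
  rw [Function.iterate_succ_apply', Function.iterate_mod_minimalPeriod_eq,
    ← Function.iterate_succ_apply' Γ.next, Function.iterate_succ_apply, ← hi,
    Equiv.Perm.iterate_eq_pow]

theorem freeRep_full_some [Finite V] (a d : Γ.Arrow) :
    freeRep K c (freeArc Γ K a (Function.minimalPeriod Γ.next a)) (.single (some d) 1) = 0 := by
  by_cases h : a.fst = c.fst ∨ a.fst = c.symm.fst
  · rcases h with h | h
    · obtain ⟨j, hj, hjc⟩ := exists_iterate_eq h
      exact freeRep_freeArc_some K c hj (Or.inl hjc) d
    · obtain ⟨j, hj, hjc⟩ := exists_iterate_eq h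
      exact freeRep_freeArc_some K c hj (Or.inr hjc) d
  · obtain ⟨k, hk⟩ := Nat.exists_eq_add_of_lt (minimalPeriod_next_pos Γ a)
    have hz : freeRep K c (freeArrow Γ K a) = freeRep K c 0 := by
      refine freeRep_ext K c fun i => ?_
      rw [freeRep_freeArrow, map_zero, LinearMap.zero_apply]
      cases i with
      | none =>
        simp only [arrowAct]
        rw [if_neg]
        rintro (h1 | h1)
        · exact h (Or.inl (by rw [← h1, Γ.next_fst]))
        · exact h (Or.inr (by rw [← h1, Γ.next_fst]))
      | some d => simp only [arrowAct, h, false_and, if_false]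
    rw [hk, freeRep_freeArc_succ, hz, map_zero, LinearMap.zero_apply]

theorem freeRep_full_none [Finite V] {a : Γ.Arrow} (h : a = c ∨ a = c.symm) :
    freeRep K c (freeArc Γ K a (Function.minimalPeriod Γ.next a)) (.single none 1) =
      .single (some c) 1 := by
  have hper := Function.iterate_minimalPeriod (f := Γ.next) (x := a)
  have hmin : ∀ j, 0 < j → j < Function.minimalPeriod Γ.next a →
      ¬ (Γ.next^[j] a = c ∨ Γ.next^[j] a = c.symm) := by
    intro j h0 hj hjc
    have : Γ.next^[j] a = a ∨ Γ.next^[j] a = a.symm := by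
      rw [← src_eq_src_iff_mem a, (src_eq_src_iff_mem c).2 hjc |>.symm,
        (src_eq_src_iff_mem c).2 h]
    rcases this with h1 | h1
    · exact Function.not_isPeriodicPt_of_pos_of_lt_minimalPeriod h0.ne' hj h1
    · have := fst_iterate a j
      rw [h1] at this
      exact a.fst_ne_snd this.symm
  have hfirst : firstArrow c a = c := by
    unfold firstArrow
    rcases h with rfl | rfl <;> simp
  obtain ⟨k, hk⟩ := Nat.exists_eq_add_of_lt (minimalPeriod_next_pos Γ a)
  rw [Nat.zero_add] at hk
  rw [hk] at hper hmin ⊢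
  rw [freeRep_freeArc_none K c (by rwa [hper]) fun j hj => hmin (j + 1) (by omega) (by omega),
    hfirst]

theorem freeRep_rel [Finite V] {f g : FreeAlgebra K Γ.Gen} (h : Rel Γ K f g) :
    freeRep K c f = freeRep K c g := by
  refine freeRep_ext K c fun i => ?_
  induction h with
  | sum_idem =>
    classical
    have : Fintype Γ.Vertex := Fintype.ofFinite _
    rw [finsum_eq_sum_of_fintype, map_sum, LinearMap.sum_apply, map_one, Module.End.one_apply]
    simp_rw [freeRep_freeIdem]
    cases i <;> simp [idemAct]
  | idem x =>
    rw [map_mul, Module.End.mul_apply, freeRep_freeIdem]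
    cases i <;> simp only [idemAct] <;> split_ifs with h <;>
      simp [freeRep_freeIdem, idemAct, h]
  | orth x y hxy =>
    rw [map_mul, Module.End.mul_apply, freeRep_freeIdem, map_zero, LinearMap.zero_apply]
    cases i <;> simp only [idemAct] <;> split_ifs with h <;>
      simp [freeRep_freeIdem, idemAct, h, hxy.symm]
  | src_mul a =>
    rw [map_mul, Module.End.mul_apply, freeRep_freeArrow]
    rcases arrowAct_eq_zero_or K c a i with h | h <;> rw [h]
    · exact map_zero _
    · rw [freeRep_freeIdem]
      simp [idemAct, src_firstArrow]
  | mul_tgt a =>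
    rw [map_mul, Module.End.mul_apply, freeRep_freeIdem, freeRep_freeArrow]
    cases i with
    | none =>
      simp only [idemAct]
      split_ifs with h
      · rw [freeRep_freeArrow]
      · rw [tgt, src_eq_src_iff_mem] at h
        simp [arrowAct, h]
    | some d =>
      simp only [idemAct]
      split_ifs with h
      · rw [freeRep_freeArrow]
      · have h' : Γ.next a ≠ d := fun h' => h (h' ▸ rfl)
        simp [arrowAct, h']
  | change a =>
    rw [map_mul, Module.End.mul_apply, freeRep_freeArrow, map_zero, LinearMap.zero_apply]
    rcases arrowAct_eq_zero_or K c (Γ.next a).symm i with h | h <;> rw [h]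
    · exact map_zero _
    · rw [freeRep_freeArrow]
      simp only [arrowAct]
      rw [if_neg]
      rintro ⟨-, h1, h2, -⟩
      unfold firstArrow at h1 h2
      split_ifs at h1 h2 with h3
      · exact h2 rfl
      · exact (Γ.next a).symm_ne h1.symm
  | full a =>
    cases i with
    | some d => rw [freeRep_full_some, freeRep_full_some]
    | none =>
      by_cases h : a = c ∨ a = c.symm
      · rw [freeRep_full_none K c h, freeRep_full_none K c (a := a.symm)]
        rwa [← src_eq_src_iff_mem, src_symm, src_eq_src_iff_mem]
      · rw [freeRep_freeArc_none_eq_zero, freeRep_freeArc_none_eq_zero]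
        · rwa [Function.iterate_minimalPeriod, ← src_eq_src_iff_mem, src_symm,
            src_eq_src_iff_mem]
        · rwa [Function.iterate_minimalPeriod]

/-- The action of `A` on the paths that end in `src c`. -/
noncomputable def rep [Finite V] : Γ.Alg K →ₐ[K] Module.End K (Option Γ.Arrow →₀ K) :=
  RingQuot.liftAlgHom K ⟨freeRep K c, fun _ _ h => freeRep_rel K c h⟩

theorem rep_mkAlg [Finite V] (f : FreeAlgebra K Γ.Gen) :
    rep K c (mkAlg Γ K f) = freeRep K c f :=
  RingQuot.liftAlgHom_mkAlgHom_apply K _ _ _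

/-- A path that is not longer than the full cycle is nonzero. -/
theorem arc_ne_zero [Finite V] {k : ℕ} (hk : k ≤ Function.minimalPeriod Γ.next c) :
    arc Γ K c k ≠ 0 := by
  have hfull : arc Γ K c (Function.minimalPeriod Γ.next c) ≠ 0 := by
    intro h0
    have h1 := freeRep_full_none K c (a := c) (Or.inl rfl)
    rw [← rep_mkAlg, ← arc, h0, map_zero, LinearMap.zero_apply] at h1
    simpa using h1.symm
  intro h
  obtain ⟨l, hl⟩ := Nat.exists_eq_add_of_le hk
  rw [hl, arc_add, h, zero_mul] at hfull
  exact hfull rfl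

end Representation

end BrauerTree

section Complexes

variable {R : Type u} [Ring R]

/-- The morphism `S ⟶ T⟦-1⟧` given by a map `S¹ ⟶ T⁰` whose composites with the differentials
vanish. -/
noncomputable def homOfDegreeOneZero {S T : CochainComplex (ModuleCat.{u} R) ℤ}
    (g : S.X 1 ⟶ T.X 0) (h₁ : S.d 0 1 ≫ g = 0) (h₂ : g ≫ T.d 0 1 = 0) :
    S ⟶ (CategoryTheory.shiftFunctor _ (-1 : ℤ)).obj T where
  f n := if h : n = 1 then (S.XIsoOfEq h).hom ≫ g ≫ (T.XIsoOfEq (by subst h; rfl)).hom else 0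
  comm' := by
    rintro i j hij
    obtain rfl : i + 1 = j := hij
    by_cases hi : i = 1
    · subst hi
      simp
      exact (neg_eq_zero.2 h₂).trans comp_zero.symm
    · by_cases hi' : i = 0
      · subst hi'
        simp
        exact zero_comp.trans h₁.symm
      · simp [hi, hi']
        exact zero_comp.trans comp_zero.symm

theorem not_homVanishes_neg_one [HasDerivedCategory.{w} (ModuleCat.{u} R)]
    {S T : CochainComplex (ModuleCat.{u} R) ℤ} (hS : IsTwoTermPerfect S) (hT : IsTwoTermPerfect T)
    (g : S.X 1 ⟶ T.X 0) (h₁ : S.d 0 1 ≫ g = 0) (h₂ : g ≫ T.d 0 1 = 0) (hg : g ≠ 0) :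
    ¬ HomVanishes S T (-1) := by
  intro hvan
  let φ := homOfDegreeOneZero g h₁ h₂
  have hφ : DerivedCategory.Q.map φ = 0 := by
    have := hvan (DerivedCategory.Q.map φ ≫
      (DerivedCategory.Q.commShiftIso (-1 : ℤ)).hom.app T)
    rwa [← cancel_mono ((DerivedCategory.Q.commShiftIso (-1 : ℤ)).hom.app T), zero_comp]
  have hH : HomologicalComplex.homologyMap φ 1 = 0 := by
    have := DerivedCategory.homologyFunctorFactors_hom_naturality φ 1
    rw [hφ, Functor.map_zero, zero_comp] at this
    exact (cancel_epi ((DerivedCategory.homologyFunctorFactors _ 1).hom.app S)).1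
      (this.symm.trans comp_zero.symm)
  have hX : IsZero ((((CategoryTheory.shiftFunctor _ (-1 : ℤ)).obj T) :
      CochainComplex (ModuleCat.{u} R) ℤ).X 0) := hT.isZero _ (by decide) (by decide)
  have : IsIso (((CategoryTheory.shiftFunctor _ (-1 : ℤ)).obj T :
      CochainComplex (ModuleCat.{u} R) ℤ).homologyπ 1) :=
    HomologicalComplex.isIso_homologyπ _ 0 1 (by simp) (hX.eq_of_src _ _)
  have : IsIso (S.iCycles 1) :=
    S.isIso_iCycles 1 2 (by simp) ((hS.isZero 2 (by decide) (by decide)).eq_of_tgt _ _)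
  have hC : HomologicalComplex.cyclesMap φ 1 = 0 := by
    rw [← cancel_mono (HomologicalComplex.homologyπ _ 1), zero_comp,
      ← HomologicalComplex.homologyπ_naturality, hH, comp_zero]
  have hf : φ.f 1 = 0 := by
    rw [← cancel_epi (S.iCycles 1), comp_zero, ← HomologicalComplex.cyclesMap_i, hC, zero_comp]
  simp [φ, homOfDegreeOneZero] at hf
  exact hg hf

end Complexes

namespace BrauerTree

section Projectives

variable {V : Type v} {Γ : BrauerTree V} {K : Type u} [Field K]

theorem mul_idem_of_mem {x : Γ.Vertex} (z : Γ.Proj K x) : z.1 * idem Γ K x = z.1 := by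
  obtain ⟨r, hr⟩ := Ideal.mem_span_singleton'.1 z.2
  rw [← hr, mul_assoc, idem_mul_self]

/-- Right multiplication by an element `p` of `A e_y`, as a map `A e_x → A e_y`. -/
noncomputable def mulRight (x : Γ.Vertex) {y : Γ.Vertex} (p : Γ.Proj K y) :
    Γ.Proj K x →ₗ[Γ.Alg K] Γ.Proj K y :=
  (LinearMap.toSpanSingleton (Γ.Alg K) (Γ.Proj K y) p).comp
    (Submodule.subtype (Ideal.span {idem Γ K x}))

theorem coe_mulRight (x : Γ.Vertex) {y : Γ.Vertex} (p : Γ.Proj K y) (z : Γ.Proj K x) :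
    (mulRight x p z).1 = z.1 * p.1 := rfl

/-- The generator `e_x` of `A e_x`. -/
noncomputable def projGen (x : Γ.Vertex) : Γ.Proj K x :=
  ⟨idem Γ K x, Ideal.mem_span_singleton_self _⟩

theorem coe_map_proj {x y : Γ.Vertex} (h : Γ.Proj K x →ₗ[Γ.Alg K] Γ.Proj K y)
    (z : Γ.Proj K x) : (h z).1 = z.1 * (h (projGen x)).1 := by
  have hz : z = z.1 • projGen x := Subtype.ext (mul_idem_of_mem z).symm
  conv_lhs => rw [hz, map_smul]
  rfl

theorem map_projGen_mem_span [Finite V] {x y : Γ.Vertex} (hxy : x ≠ y)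
    (h : Γ.Proj K x →ₗ[Γ.Alg K] Γ.Proj K y) :
    (h (projGen x)).1 ∈ Submodule.span K {w | ∃ (a : Γ.Arrow) (k : ℕ), 0 < k ∧ src a = x ∧
      src (Γ.next^[k] a) = y ∧ w = arc Γ K a k} :=
  mem_span_arc Γ K hxy (coe_map_proj h (projGen x)).symm (mul_idem_of_mem _)

end Projectives

namespace Diagram

variable {V : Type v} {Γ : BrauerTree V} {K : Type u} [Field K]

namespace Overlap

variable {D D' : Γ.Diagram} {a : Γ.Arrow} {m : ℕ}

theorem lt_minimalPeriod [Finite V] (h : D.Overlap D' a m) :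
    m < Function.minimalPeriod Γ.next a := by
  obtain ⟨j, hj, hjD⟩ := D'.exists_lt_iterate_notMem a (minimalPeriod_next_pos Γ a)
    Function.iterate_minimalPeriod
  by_contra! hm
  exact hjD (h.mem_right j (by omega))

variable (Γ) in
theorem minimalPeriod_iterate [Finite V] (b : Γ.Arrow) (k : ℕ) :
    Function.minimalPeriod Γ.next (Γ.next^[k] b) = Function.minimalPeriod Γ.next b :=
  Function.minimalPeriod_apply_iterate (Γ.next.injective.mem_periodicPts b) k

/-- The path that completes the overlap to a full cycle. -/
noncomputable def complement (_ : D.Overlap D' a m) (K : Type u) [Field K] : Γ.Alg K :=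
  arc Γ K (Γ.next^[m + 1] a) (Function.minimalPeriod Γ.next a - m)

theorem iterate_complement [Finite V] (h : D.Overlap D' a m) :
    Γ.next^[Function.minimalPeriod Γ.next a - m] (Γ.next^[m + 1] a) = Γ.next a := by
  have := h.lt_minimalPeriod
  rw [← Function.iterate_add_apply, show Function.minimalPeriod Γ.next a - m + (m + 1) =
    1 + Function.minimalPeriod Γ.next a by omega, Function.iterate_add_apply,
    Function.iterate_minimalPeriod, Function.iterate_one]

theorem complement_ne_zero [Finite V] (h : D.Overlap D' a m) : h.complement K ≠ 0 :=
  arc_ne_zero K _ (by rw [minimalPeriod_iterate]; omega)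

theorem idem_mul_complement (h : D.Overlap D' a m) :
    idem Γ K (src (Γ.next^[m + 1] a)) * h.complement K = h.complement K :=
  idem_src_mul_arc Γ K _ _

theorem complement_mul_idem [Finite V] (h : D.Overlap D' a m) :
    h.complement K * idem Γ K (src (Γ.next a)) = h.complement K := by
  conv_lhs => rw [← h.iterate_complement]
  exact arc_mul_idem Γ K _ _

/-- The complement of the overlap, as an element of `A e_s` for the source `s`. -/
noncomputable def complementProj [Finite V] (h : D.Overlap D' a m) (K : Type u) [Field K] :
    Γ.Proj K (src (Γ.next a)) :=
  ⟨h.complement K, Ideal.mem_span_singleton'.2 ⟨_, h.complement_mul_idem⟩⟩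

theorem arc_mul_complement [Finite V] (h : D.Overlap D' a m) {d : Γ.Arrow} {k : ℕ} (hk : 0 < k)
    (hd : src d ∈ D'.sources) (hdk : src (Γ.next^[k] d) = src (Γ.next^[m + 1] a)) :
    arc Γ K d k * h.complement K = 0 := by
  have hm := h.lt_minimalPeriod
  rcases src_eq_src_iff.1 hdk.symm with hc | hc
  · have hper : Function.minimalPeriod Γ.next d = Function.minimalPeriod Γ.next a := by
      rw [← minimalPeriod_iterate Γ d k, ← hc, minimalPeriod_iterate]
    rw [complement, hc, ← arc_add]
    refine arc_eq_zero Γ K d ?_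
    have hkm : m < k := by
      by_contra! hkm
      refine hd.2 _ (h.mem_right (m - k) (by omega)) ?_
      rw [tgt_iterate]
      congr 1
      refine Γ.next.injective.iterate k ?_
      rw [← hc, ← Function.iterate_add_apply, show k + (m - k + 1) = m + 1 by omega]
    omega
  · rw [complement, hc]
    exact arc_mul_arc_symm Γ K d hk (by omega)

theorem complement_mul_arc [Finite V] (h : D.Overlap D' a m) {d : Γ.Arrow} {k : ℕ} (hk : 0 < k)
    (hd : src d = src (Γ.next a)) (hdk : src (Γ.next^[k] d) ∈ D.sinks) :
    h.complement K * arc Γ K d k = 0 := by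
  have hm := h.lt_minimalPeriod
  rcases src_eq_src_iff.1 hd with rfl | rfl
  · have hkm : m < k := by
      by_contra! hkm
      exact hdk.2 _ (h.mem_left k hkm) rfl
    rw [complement, ← h.iterate_complement, ← arc_add]
    refine arc_eq_zero Γ K _ ?_
    rw [minimalPeriod_iterate]
    omega
  · rw [complement, ← h.iterate_complement]
    exact arc_mul_arc_symm Γ K _ (by omega) hk

theorem mulRight_comp [Finite V] (h : D.Overlap D' a m) {x : Γ.Vertex} (hx : x ∈ D'.sources)
    (f : Γ.Proj K x →ₗ[Γ.Alg K] Γ.Proj K (src (Γ.next^[m + 1] a))) :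
    mulRight _ (h.complementProj K) ∘ₗ f = 0 := by
  have hne : x ≠ src (Γ.next^[m + 1] a) := fun hxs =>
    hx.2 _ (h.mem_right m le_rfl) ((tgt_iterate a m).trans hxs.symm)
  have key : (f (projGen x)).1 * h.complement K = 0 := by
    have hf := map_projGen_mem_span hne f
    generalize (f (projGen _)).1 = z at hf ⊢
    induction hf using Submodule.span_induction with
    | mem w hw =>
      obtain ⟨d, k, hk, rfl, hdk, rfl⟩ := hw
      exact h.arc_mul_complement hk hx hdk
    | zero => exact zero_mul _
    | add v w _ _ hv hw => rw [add_mul, hv, hw, add_zero]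
    | smul r w _ hw => rw [smul_mul_assoc, hw, smul_zero]
  ext z
  rw [LinearMap.comp_apply, coe_mulRight, coe_map_proj, mul_assoc]
  exact (congrArg _ key).trans (mul_zero _)

theorem comp_mulRight [Finite V] (h : D.Overlap D' a m) {y : Γ.Vertex} (hy : y ∈ D.sinks)
    (f : Γ.Proj K (src (Γ.next a)) →ₗ[Γ.Alg K] Γ.Proj K y) (x : Γ.Vertex) :
    f ∘ₗ mulRight x (h.complementProj K) = 0 := by
  have hne : src (Γ.next a) ≠ y := fun hxs => hy.2 _ (h.mem_left 0 (Nat.zero_le _)) hxs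
  have key : h.complement K * (f (projGen _)).1 = 0 := by
    have hf := map_projGen_mem_span hne f
    generalize (f (projGen _)).1 = z at hf ⊢
    induction hf using Submodule.span_induction with
    | mem w hw =>
      obtain ⟨d, k, hk, hd, rfl, rfl⟩ := hw
      exact h.complement_mul_arc hk hd hy
    | zero => exact mul_zero _
    | add v w _ _ hv hw => rw [mul_add, hv, hw, add_zero]
    | smul r w _ hw => rw [mul_smul_comm, hw, smul_zero]
  ext z
  rw [LinearMap.comp_apply, coe_map_proj, coe_mulRight, mul_assoc]
  exact (congrArg _ key).trans (mul_zero _)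

theorem mulRight_ne_zero [Finite V] (h : D.Overlap D' a m) :
    mulRight (src (Γ.next^[m + 1] a)) (h.complementProj K) ≠ 0 := by
  intro h0
  have := congrArg Subtype.val (LinearMap.congr_fun h0 (projGen _))
  rw [coe_mulRight] at this
  exact h.complement_ne_zero (h.idem_mul_complement.symm.trans this)

/-- Overlapping diagrams give a nonzero morphism `S ⟶ T[-1]`. -/
theorem not_homVanishes [Finite V] [HasDerivedCategory.{w} (ModuleCat.{max u v} (Γ.Alg K))]
    (h : D.Overlap D' a m) {S T : Γ.Cplx K} (hS : IsTwoTermPerfect S) (hT : IsTwoTermPerfect T)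
    (hDT : D.IsDiagramOf T) (hDS : D'.IsDiagramOf S) : ¬ HomVanishes S T (-1) := by
  classical
  obtain ⟨φ, ψ', -⟩ := hDT
  obtain ⟨φ', ψ, -⟩ := hDS
  let s : D.sources := ⟨_, h.source⟩
  let t : D'.sinks := ⟨_, h.sink⟩
  let ι := LinearMap.single (Γ.Alg K) (fun i : D.sources => Γ.Proj K i.1) s
  let π := LinearMap.proj (R := Γ.Alg K) (φ := fun j : D'.sinks => Γ.Proj K j.1) t
  let g : S.X 1 →ₗ[Γ.Alg K] T.X 0 := φ.symm.toLinearMap ∘ₗ ι ∘ₗ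
    mulRight t.1 (h.complementProj K) ∘ₗ π ∘ₗ ψ.toLinearMap
  refine not_homVanishes_neg_one hS hT (ModuleCat.ofHom g) ?_ ?_ ?_
  · have key : mulRight t.1 (h.complementProj K) ∘ₗ π ∘ₗ ψ.toLinearMap ∘ₗ (S.d 0 1).hom ∘ₗ
        φ'.symm.toLinearMap = 0 := by
      refine LinearMap.pi_ext' fun i => ?_
      exact h.mulRight_comp i.2 (π ∘ₗ ψ.toLinearMap ∘ₗ (S.d 0 1).hom ∘ₗ φ'.symm.toLinearMap ∘ₗ
        LinearMap.single (Γ.Alg K) (fun i : D'.sources => Γ.Proj K i.1) i)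
    ext z
    have hz := LinearMap.congr_fun key (φ' z)
    simp only [LinearMap.comp_apply, LinearEquiv.coe_coe, LinearEquiv.symm_apply_apply,
      LinearMap.zero_apply] at hz
    simp [g, hz]
  · have key : ψ'.toLinearMap ∘ₗ (T.d 0 1).hom ∘ₗ φ.symm.toLinearMap ∘ₗ ι ∘ₗ
        mulRight t.1 (h.complementProj K) = 0 := by
      refine LinearMap.ext fun z => funext fun j => ?_
      exact LinearMap.congr_fun (h.comp_mulRight j.2 (LinearMap.proj j ∘ₗ ψ'.toLinearMap ∘ₗ
        (T.d 0 1).hom ∘ₗ φ.symm.toLinearMap ∘ₗ ι) t.1) z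
    ext z
    have hz := LinearMap.congr_fun key (π (ψ z))
    simp only [LinearMap.comp_apply, LinearEquiv.coe_coe, LinearMap.zero_apply,
      LinearEquiv.map_eq_zero_iff] at hz
    simpa [g] using hz
  · intro hg
    have hg' : g = 0 := congrArg ModuleCat.Hom.hom hg
    refine h.mulRight_ne_zero (K := K) (LinearMap.ext fun z => ?_)
    have hz := LinearMap.congr_fun hg' (ψ.symm (Pi.single t z))
    simp only [g, LinearMap.comp_apply, LinearEquiv.coe_coe, LinearEquiv.apply_symm_apply,
      LinearMap.zero_apply, LinearEquiv.map_eq_zero_iff, π, LinearMap.proj_apply,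
      Pi.single_eq_same] at hz
    exact (Pi.single_eq_zero_iff (i := s)).1 hz

end Overlap

end Diagram

end BrauerTree

theorem hom_nonzero_of_many_components {K : Type u} [Field K] [IsAlgClosed K]
    {V : Type v} [Finite V] (Γ : BrauerTree V)
    [HasDerivedCategory.{w} (ModuleCat.{max u v} (Γ.Alg K))]
    (Ti Tj : Γ.Cplx K)
    (hTi : IsPartialTiltingPresentation Ti) (hTj : IsPartialTiltingPresentation Tj)
    (Di Dj : Γ.Diagram) (hDi : Di.IsDiagramOf Ti) (hDj : Dj.IsDiagramOf Tj)
    (h : Nontrivial (Di.inter Dj).ConnectedComponent) :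
    ¬ HomVanishes Ti Tj (-1) ∨ ¬ HomVanishes Tj Ti (-1) := by
  obtain ⟨_, _, _, hi⟩ := hTi.presentation
  obtain ⟨_, _, _, hj⟩ := hTj.presentation
  obtain ⟨a, m, ham⟩ := Di.exists_overlap Dj h
  exact Or.inr (ham.not_homVanishes hj.toIsTwoTermPerfect hi.toIsTwoTermPerfect hDi hDj)
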